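/- Let μ₁, ν₁, μ₂, ν₂ > 0, set a_k = μ_k + ν_k, r_k = √(μ_k ν_k), and R = μ₁ν₁μ₂ν₂, let θ > 0 satisfy θ·r₁·r₂ < 1, and let β > 0, c₁, c₂ be real constants. Then the covariance expression of the main theorem with p₁ = p₂ = 2, namely (4c₁·2·2/(β(iπ)²)) · ∮∮_{upper semicircles, radii r₁, r₂} (a₁ + 2Re ζ₁)(a₂ + 2Re ζ₂)·log| (θ^{-1} − ζ₁ζ₂)/(θ^{-1} − ζ₁·conj(ζ₂)) |·(Im ζ₁/ζ₁)(Im ζ₂/ζ₂) dζ₁ dζ₂ + (4(c₂ − 1 − 2β^{-1}c₁)·θ·2·2/(πi)²) · ∮∮_{upper semicircles, radii r₁, r₂} (a₁ + 2Re ζ₁)(a₂ + 2Re ζ₂)·((Im ζ₁)²/ζ₁)·((Im ζ₂)²/ζ₂) dζ₁ dζ₂, equals 2·c₁·β^{-1}·θ·R·(4·a₁·a₂ + 2·θ·R) + 4·(c₂ − 1 − 2β^{-1}c₁)·θ·R·a₁·a₂. -/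

import Mathlib

open Complex Real

/-- The iterated contour integral `∮∮ f(ζ₁,ζ₂) dζ₁ dζ₂` over upper semicircles of radii
`r₁` and `r₂` centered at the origin. -/
noncomputable def semicircleIntegral2 (f : ℂ → ℂ → ℂ) (r₁ r₂ : ℝ) : ℂ :=
  ∫ t₁ in (0 : ℝ)..π, ∫ t₂ in (0 : ℝ)..π,
    f ((r₁ : ℂ) * Complex.exp (Complex.I * t₁)) ((r₂ : ℂ) * Complex.exp (Complex.I * t₂)) *
      (Complex.I * r₁ * Complex.exp (Complex.I * t₁)) *
      (Complex.I * r₂ * Complex.exp (Complex.I * t₂))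

lemma aux_cosint (m : ℤ) : ∫ t in (0:ℝ)..π, Real.cos (m * t) = if m = 0 then π else 0 := by
  split_ifs with hm
  · subst hm; simp
  · have : (m:ℝ) ≠ 0 := by exact_mod_cast hm
    rw [intervalIntegral.integral_comp_mul_left (fun x => Real.cos x) this]
    simp [Real.sin_int_mul_pi]

lemma aux_coef (a r : ℝ) (n : ℕ) :
    ∫ t in (0:ℝ)..π, (a + 2 * r * Real.cos t) * Real.sin t * Real.sin (n * t)
      = if n = 1 then a * π / 2 else if n = 2 then r * π / 2 else 0 := by
  have key : ∀ t : ℝ, (a + 2 * r * Real.cos t) * Real.sin t * Real.sin (n * t)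
      = a / 2 * Real.cos (((n - 1 : ℤ) : ℝ) * t) - a / 2 * Real.cos (((n + 1 : ℤ) : ℝ) * t)
       + r / 2 * Real.cos (((n - 2 : ℤ) : ℝ) * t) - r / 2 * Real.cos (((n + 2 : ℤ) : ℝ) * t) := by
    intro t
    push_cast
    have e1 : ((n:ℝ) - 1) * t = n * t - t := by ring
    have e2 : ((n:ℝ) + 1) * t = n * t + t := by ring
    have e3 : ((n:ℝ) - 2) * t = n * t - 2 * t := by ring
    have e4 : ((n:ℝ) + 2) * t = n * t + 2 * t := by ring
    rw [e1, e2, e3, e4, Real.cos_sub, Real.cos_add, Real.cos_sub, Real.cos_add, Real.sin_two_mul]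
    ring
  simp_rw [key]
  have ii : ∀ (c : ℝ) (m : ℤ), IntervalIntegrable (fun t : ℝ => c * Real.cos ((m:ℝ) * t))
      MeasureTheory.volume 0 π := fun c m => (by fun_prop : Continuous _).intervalIntegrable _ _
  rw [intervalIntegral.integral_sub (((ii _ _).sub (ii _ _)).add (ii _ _)) (ii _ _),
    intervalIntegral.integral_add ((ii _ _).sub (ii _ _)) (ii _ _),
    intervalIntegral.integral_sub (ii _ _) (ii _ _)]
  simp only [intervalIntegral.integral_const_mul, aux_cosint]
  rcases Nat.lt_or_ge n 3 with hn | hn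
  · interval_cases n <;> norm_num <;> ring
  · rw [if_neg (by omega), if_neg (by omega), if_neg (by omega), if_neg (by omega),
      if_neg (by omega), if_neg (by omega)]
    ring

lemma aux_norm (q φ : ℝ) : ‖(q:ℂ) * Complex.exp (Complex.I * φ)‖ = |q| := by
  rw [norm_mul, mul_comm Complex.I, Complex.norm_exp_ofReal_mul_I]; simp

lemma aux_series (q φ : ℝ) (hq : |q| < 1) :
    HasSum (fun n : ℕ => q ^ n / n * Real.cos (n * φ))
      (- Real.log ‖1 - (q:ℂ) * Complex.exp (Complex.I * φ)‖) := by
  have h := Complex.hasSum_taylorSeries_neg_log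
    (z := (q:ℂ) * Complex.exp (Complex.I * φ)) (by rw [aux_norm]; exact hq)
  have h2 := Complex.hasSum_re h
  rw [Complex.neg_re, Complex.log_re] at h2
  convert h2 using 2 with n
  have : ((q:ℂ) * Complex.exp (Complex.I * φ)) ^ n / n
      = ((q ^ n / n : ℝ) : ℂ) * Complex.exp (((n * φ : ℝ) : ℂ) * Complex.I) := by
    rw [mul_pow, ← Complex.exp_nat_mul]
    push_cast
    rw [show (n:ℂ) * (Complex.I * φ) = n * φ * Complex.I by ring]
    ring
  rw [this, Complex.re_ofReal_mul, Complex.exp_ofReal_mul_I_re]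

lemma aux_series2 (q s t : ℝ) (hq : |q| < 1) :
    HasSum (fun n : ℕ => 2 * q ^ n / n * Real.sin (n * s) * Real.sin (n * t))
      (Real.log ‖1 - (q:ℂ) * Complex.exp (Complex.I * (s + t : ℝ))‖
        - Real.log ‖1 - (q:ℂ) * Complex.exp (Complex.I * (s - t : ℝ))‖) := by
  have := (aux_series q (s - t) hq).sub (aux_series q (s + t) hq)
  have e1 : (fun n : ℕ => 2 * q ^ n / n * Real.sin (n * s) * Real.sin (n * t))
      = fun n : ℕ => q ^ n / n * Real.cos (n * (s - t)) - q ^ n / n * Real.cos (n * (s + t)) := by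
    funext n
    rw [mul_sub, mul_add, Real.cos_sub, Real.cos_add]; ring
  rw [e1]
  rwa [neg_sub_neg] at this

lemma aux_inner (a r q s : ℝ) (hq : |q| < 1) :
    ∫ t in (0:ℝ)..π, (a + 2 * r * Real.cos t) * Real.sin t *
      (Real.log ‖1 - (q:ℂ) * Complex.exp (Complex.I * (s + t : ℝ))‖
        - Real.log ‖1 - (q:ℂ) * Complex.exp (Complex.I * (s - t : ℝ))‖)
      = π / 2 * (2 * a * q * Real.sin s + r * q ^ 2 * Real.sin (2 * s)) := by
  have hs : ∀ n : ℕ, ∀ t : ℝ, ‖(a + 2 * r * Real.cos t) * Real.sin t *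
      (2 * q ^ n / n * Real.sin (n * s) * Real.sin (n * t))‖
        ≤ (|a| + 2 * |r|) * (2 * |q| ^ n) := by
    intro n t
    have h1 : |a + 2 * r * Real.cos t| ≤ |a| + 2 * |r| := by
      refine (abs_add_le _ _).trans ?_
      rw [abs_mul, abs_mul, abs_two]
      have := Real.abs_cos_le_one t
      nlinarith [abs_nonneg r]
    have h2 : |2 * q ^ n / n| ≤ 2 * |q| ^ n := by
      rw [abs_div, abs_mul, abs_pow, abs_two, Nat.abs_cast]
      rcases Nat.eq_zero_or_pos n with rfl | hn
      · simp
      · exact div_le_self (by positivity) (by exact_mod_cast hn)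
    rw [Real.norm_eq_abs, abs_mul, abs_mul, abs_mul, abs_mul]
    calc _ ≤ (|a| + 2 * |r|) * 1 * (2 * |q| ^ n * 1 * 1) := by
          gcongr <;> exact Real.abs_sin_le_one _
      _ = _ := by ring
  have H := intervalIntegral.hasSum_integral_of_dominated_convergence
    (μ := MeasureTheory.volume) (a := 0) (b := π)
    (F := fun (n : ℕ) (t : ℝ) => (a + 2 * r * Real.cos t) * Real.sin t *
      (2 * q ^ n / n * Real.sin (n * s) * Real.sin (n * t)))
    (f := fun t => (a + 2 * r * Real.cos t) * Real.sin t *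
      (Real.log ‖1 - (q:ℂ) * Complex.exp (Complex.I * (s + t : ℝ))‖
        - Real.log ‖1 - (q:ℂ) * Complex.exp (Complex.I * (s - t : ℝ))‖))
    (fun n _ => (|a| + 2 * |r|) * (2 * |q| ^ n))
    (fun n => (by fun_prop : Continuous _).aestronglyMeasurable)
    (fun n => Filter.Eventually.of_forall fun t _ => hs n t)
    (Filter.Eventually.of_forall fun t _ =>
      ((summable_geometric_of_lt_one (abs_nonneg q) hq).mul_left 2).mul_left _)
    (by simp)
    (Filter.Eventually.of_forall fun t _ => (aux_series2 q s t hq).mul_left _)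
  have H2 : ∀ n : ℕ, ∫ t in (0:ℝ)..π, (a + 2 * r * Real.cos t) * Real.sin t *
      (2 * q ^ n / n * Real.sin (n * s) * Real.sin (n * t))
      = 2 * q ^ n / n * Real.sin (n * s) *
        (if n = 1 then a * π / 2 else if n = 2 then r * π / 2 else 0) := by
    intro n
    rw [← aux_coef, ← intervalIntegral.integral_const_mul]
    congr 1; funext t; ring
  simp only [H2] at H
  have H3 := hasSum_sum_of_ne_finset_zero (L := SummationFilter.unconditional ℕ) (s := {1, 2})
    (f := fun n : ℕ => 2 * q ^ n / n * Real.sin (n * s) *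
        (if n = 1 then a * π / 2 else if n = 2 then r * π / 2 else 0)) (by
      intro n hn
      simp at hn
      simp [hn.1, hn.2])
  rw [H.unique H3, Finset.sum_pair (by norm_num)]
  norm_num
  ring

lemma aux_main (a₁ a₂ r₁ r₂ q : ℝ) (hq : |q| < 1) :
    ∫ s in (0:ℝ)..π, ∫ t in (0:ℝ)..π, (a₁ + 2 * r₁ * Real.cos s) * Real.sin s *
      ((a₂ + 2 * r₂ * Real.cos t) * Real.sin t *
      (Real.log ‖1 - (q:ℂ) * Complex.exp (Complex.I * (s + t : ℝ))‖
        - Real.log ‖1 - (q:ℂ) * Complex.exp (Complex.I * (s - t : ℝ))‖))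
      = π ^ 2 / 4 * (2 * a₁ * a₂ * q + r₁ * r₂ * q ^ 2) := by
  simp only [intervalIntegral.integral_const_mul, aux_inner _ _ _ _ hq]
  have h1 := aux_coef a₁ r₁ 1
  have h2 := aux_coef a₁ r₁ 2
  have e : ∀ s : ℝ, (a₁ + 2 * r₁ * Real.cos s) * Real.sin s *
      (π / 2 * (2 * a₂ * q * Real.sin s + r₂ * q ^ 2 * Real.sin (2 * s)))
      = π * a₂ * q * ((a₁ + 2 * r₁ * Real.cos s) * Real.sin s * Real.sin ((1:ℕ) * s))
       + π / 2 * r₂ * q ^ 2 * ((a₁ + 2 * r₁ * Real.cos s) * Real.sin s * Real.sin ((2:ℕ) * s)) := by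
    intro s; push_cast; rw [one_mul]; ring
  simp only [e]
  rw [intervalIntegral.integral_add ((by fun_prop : Continuous _).intervalIntegrable _ _)
    ((by fun_prop : Continuous _).intervalIntegrable _ _),
    intervalIntegral.integral_const_mul, intervalIntegral.integral_const_mul, h1, h2]
  norm_num
  ring

lemma aux_second (a r : ℝ) :
    ∫ t in (0:ℝ)..π, (a + 2 * r * Real.cos t) * Real.sin t ^ 2 = a * π / 2 := by
  have h1 := aux_coef a r 1
  rw [if_pos rfl] at h1
  rw [← h1]
  congr 1; funext t; push_cast; rw [one_mul]; ring

lemma aux_re (r t : ℝ) : ((r:ℂ) * Complex.exp (Complex.I * t)).re = r * Real.cos t := by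
  rw [Complex.re_ofReal_mul, mul_comm Complex.I, Complex.exp_ofReal_mul_I_re]

lemma aux_im (r t : ℝ) : ((r:ℂ) * Complex.exp (Complex.I * t)).im = r * Real.sin t := by
  rw [Complex.im_ofReal_mul, mul_comm Complex.I, Complex.exp_ofReal_mul_I_im]

lemma aux_log (θ r₁ r₂ s t : ℝ) (hθ : 0 < θ) (hq : |θ * r₁ * r₂| < 1) :
    Real.log (norm
      ((((θ : ℂ))⁻¹ - (r₁ * Complex.exp (Complex.I * s)) * (r₂ * Complex.exp (Complex.I * t))) /
       (((θ : ℂ))⁻¹ - (r₁ * Complex.exp (Complex.I * s)) *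
          (starRingEnd ℂ) (r₂ * Complex.exp (Complex.I * t)))))
    = Real.log ‖1 - ((θ * r₁ * r₂ : ℝ):ℂ) * Complex.exp (Complex.I * (s + t : ℝ))‖
        - Real.log ‖1 - ((θ * r₁ * r₂ : ℝ):ℂ) * Complex.exp (Complex.I * (s - t : ℝ))‖ := by
  have hθ' : (θ:ℂ) ≠ 0 := by exact_mod_cast hθ.ne'
  have hne : ∀ φ : ℝ, ‖1 - ((θ * r₁ * r₂ : ℝ):ℂ) * Complex.exp (Complex.I * φ)‖ ≠ 0 := by
    intro φ h0
    rw [norm_eq_zero, sub_eq_zero] at h0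
    have := aux_norm (θ * r₁ * r₂) φ
    rw [← h0, norm_one] at this
    linarith
  have hc : (starRingEnd ℂ) (r₂ * Complex.exp (Complex.I * t))
      = r₂ * Complex.exp (Complex.I * (-t : ℝ)) := by
    rw [map_mul, Complex.conj_ofReal, ← Complex.exp_conj]
    simp
  have e : ∀ u : ℝ, (((θ : ℂ))⁻¹ - (r₁ * Complex.exp (Complex.I * s)) *
      (r₂ * Complex.exp (Complex.I * u)))
      = (θ:ℂ)⁻¹ * (1 - ((θ * r₁ * r₂ : ℝ):ℂ) * Complex.exp (Complex.I * (s + u : ℝ))) := by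
    intro u
    push_cast
    rw [mul_add, Complex.exp_add]
    field_simp
  rw [hc, e, e, mul_div_mul_left _ _ (inv_ne_zero hθ'), norm_div, ← sub_eq_add_neg,
    Real.log_div (hne _) (hne _)]

/-- The covariance expression of the main theorem for `p₁ = p₂ = 2` evaluates to
`2c₁β⁻¹θR(4a₁a₂ + 2θR) + 4(c₂ − 1 − 2β⁻¹c₁)θRa₁a₂` where `R = μ₁ν₁μ₂ν₂`. -/
theorem covariance_formula_p_two
    (μ₁ ν₁ μ₂ ν₂ : ℝ) (hμ₁ : 0 < μ₁) (hν₁ : 0 < ν₁) (hμ₂ : 0 < μ₂) (hν₂ : 0 < ν₂)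
    (θ : ℝ) (hθ : 0 < θ) (β c₁ c₂ : ℝ) (hβ : 0 < β)
    (a₁ a₂ r₁ r₂ R : ℝ) (ha₁ : a₁ = μ₁ + ν₁) (ha₂ : a₂ = μ₂ + ν₂)
    (hr₁ : r₁ = Real.sqrt (μ₁ * ν₁)) (hr₂ : r₂ = Real.sqrt (μ₂ * ν₂))
    (hR : R = μ₁ * ν₁ * μ₂ * ν₂)
    (h : θ * r₁ * r₂ < 1) :
    ((4 * c₁ * 2 * 2 : ℂ) / (β * (Complex.I * π) ^ 2)) *
        semicircleIntegral2
          (fun ζ₁ ζ₂ =>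
            ((a₁ : ℂ) + 2 * (ζ₁.re : ℂ)) * ((a₂ : ℂ) + 2 * (ζ₂.re : ℂ)) *
              ((Real.log (norm
                  ((((θ : ℂ))⁻¹ - ζ₁ * ζ₂) / (((θ : ℂ))⁻¹ - ζ₁ * (starRingEnd ℂ) ζ₂))) : ℂ)) *
              ((ζ₁.im : ℂ) / ζ₁) * ((ζ₂.im : ℂ) / ζ₂))
          r₁ r₂ +
      ((4 * (c₂ - 1 - 2 * β⁻¹ * c₁) * θ * 2 * 2 : ℂ) / (π * Complex.I) ^ 2) *
        semicircleIntegral2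
          (fun ζ₁ ζ₂ =>
            ((a₁ : ℂ) + 2 * (ζ₁.re : ℂ)) * ((a₂ : ℂ) + 2 * (ζ₂.re : ℂ)) *
              ((ζ₁.im : ℂ) ^ 2 / ζ₁) * ((ζ₂.im : ℂ) ^ 2 / ζ₂))
          r₁ r₂ =
      ((2 * c₁ * β⁻¹ * θ * R * (4 * a₁ * a₂ + 2 * θ * R)
        + 4 * (c₂ - 1 - 2 * β⁻¹ * c₁) * θ * R * a₁ * a₂ : ℝ) : ℂ) := by
  have hr₁p : 0 < r₁ := hr₁ ▸ Real.sqrt_pos.2 (mul_pos hμ₁ hν₁)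
  have hr₂p : 0 < r₂ := hr₂ ▸ Real.sqrt_pos.2 (mul_pos hμ₂ hν₂)
  have hRr : R = r₁ ^ 2 * r₂ ^ 2 := by
    rw [hr₁, hr₂, Real.sq_sqrt (mul_pos hμ₁ hν₁).le, Real.sq_sqrt (mul_pos hμ₂ hν₂).le, hR]
    ring
  have hq : |θ * r₁ * r₂| < 1 := by
    rw [abs_of_pos (by positivity)]; exact h
  have hr₁c : (r₁:ℂ) ≠ 0 := by exact_mod_cast hr₁p.ne'
  have hr₂c : (r₂:ℂ) ≠ 0 := by exact_mod_cast hr₂p.ne'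
  have I1 : semicircleIntegral2
          (fun ζ₁ ζ₂ =>
            ((a₁ : ℂ) + 2 * (ζ₁.re : ℂ)) * ((a₂ : ℂ) + 2 * (ζ₂.re : ℂ)) *
              ((Real.log (norm
                  ((((θ : ℂ))⁻¹ - ζ₁ * ζ₂) / (((θ : ℂ))⁻¹ - ζ₁ * (starRingEnd ℂ) ζ₂))) : ℂ)) *
              ((ζ₁.im : ℂ) / ζ₁) * ((ζ₂.im : ℂ) / ζ₂))
          r₁ r₂ = ((-(r₁ * r₂) * (π ^ 2 / 4 * (2 * a₁ * a₂ * (θ * r₁ * r₂)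
            + r₁ * r₂ * (θ * r₁ * r₂) ^ 2)) : ℝ) : ℂ) := by
    unfold semicircleIntegral2
    rw [← aux_main a₁ a₂ r₁ r₂ _ hq]
    simp only [← intervalIntegral.integral_const_mul]
    rw [← intervalIntegral.integral_ofReal]
    congr 1; funext s
    rw [← intervalIntegral.integral_ofReal]
    congr 1; funext t
    rw [aux_log θ r₁ r₂ s t hθ hq, aux_re, aux_re, aux_im, aux_im]
    have h1 := Complex.exp_ne_zero (Complex.I * s)
    have h2 := Complex.exp_ne_zero (Complex.I * t)
    generalize Real.log ‖1 - ((θ * r₁ * r₂ : ℝ):ℂ) * Complex.exp (Complex.I * (s + t : ℝ))‖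
        - Real.log ‖1 - ((θ * r₁ * r₂ : ℝ):ℂ) * Complex.exp (Complex.I * (s - t : ℝ))‖ = L
    generalize Complex.exp (Complex.I * s) = E1 at *
    generalize Complex.exp (Complex.I * t) = E2 at *
    push_cast
    field_simp
    rw [Complex.I_sq]
    ring
  have I2 : semicircleIntegral2
          (fun ζ₁ ζ₂ =>
            ((a₁ : ℂ) + 2 * (ζ₁.re : ℂ)) * ((a₂ : ℂ) + 2 * (ζ₂.re : ℂ)) *
              ((ζ₁.im : ℂ) ^ 2 / ζ₁) * ((ζ₂.im : ℂ) ^ 2 / ζ₂))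
          r₁ r₂ = ((-(r₁ ^ 2 * r₂ ^ 2) * ((a₁ * π / 2) * (a₂ * π / 2)) : ℝ) : ℂ) := by
    unfold semicircleIntegral2
    rw [← aux_second a₁ r₁, ← aux_second a₂ r₂]
    rw [← intervalIntegral.integral_mul_const]
    simp only [← intervalIntegral.integral_const_mul]
    rw [← intervalIntegral.integral_ofReal]
    congr 1; funext s
    rw [← intervalIntegral.integral_ofReal]
    congr 1; funext t
    rw [aux_re, aux_re, aux_im, aux_im]
    have h1 := Complex.exp_ne_zero (Complex.I * s)
    have h2 := Complex.exp_ne_zero (Complex.I * t)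
    generalize Complex.exp (Complex.I * s) = E1 at *
    generalize Complex.exp (Complex.I * t) = E2 at *
    push_cast
    field_simp
    rw [Complex.I_sq]
    ring
  rw [I1, I2, hRr, mul_comm (π:ℂ) Complex.I, mul_pow, Complex.I_sq]
  have hπ : (π:ℂ) ≠ 0 := by exact_mod_cast Real.pi_ne_zero
  have hβ' : (β:ℂ) ≠ 0 := by exact_mod_cast hβ.ne'
  push_cast
  field_simp
  ring
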